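/- The Bankers cost model (⇓ᴮ, Φᴮ, ⌊·⌋ᴮ) is sound: whenever Γ : e ⇓ᴮ_n Δ : v, there exists k with ⌊Γ⌋ᴮ : e ⇓ᴿ_k ⌊Δ⌋ᴮ : v and k + Φᴮ(Δ) − Φᴮ(Γ) ≤ n. -/

import Mathlib

/-! ## Syntax of the fine-grain call-by-value lambda calculus with thunks -/

mutual
inductive Val : Type where
  | var : String → Val
  | ptr : Nat → Val
  | unit : Val
  | inl : Val → Val
  | inr : Val → Val
  | pair : Val → Val → Val
  | lam : String → Expr → Val

inductive HeapVal : Type where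
  | fold : Val → HeapVal
  | memo : Val → HeapVal
  | lazy : String → Val → HeapVal

inductive Expr : Type where
  | ret : Val → Expr
  | alloc : HeapVal → Expr
  | letE : String → Expr → Expr → Expr
  | caseE : Val → String → Expr → String → Expr → Expr
  | splitE : Val → String → String → Expr → Expr
  | app : Val → Val → Expr
  | unfoldE : Val → Expr
  | call : String → Val → Expr
  | force : Val → Expr
  | save : Nat → Val → Expr
  | spend : Nat → Val → Expr → Expr
  | pass : Val → Expr
end

/-! ## Capture-avoiding substitution (values substituted are closed) -/

mutual
def substV (v : Val) (x : String) : Val → Val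
  | .var y => if y = x then v else .var y
  | .ptr a => .ptr a
  | .unit => .unit
  | .inl w => .inl (substV v x w)
  | .inr w => .inr (substV v x w)
  | .pair w₁ w₂ => .pair (substV v x w₁) (substV v x w₂)
  | .lam y e => if y = x then .lam y e else .lam y (substE v x e)

def substH (v : Val) (x : String) : HeapVal → HeapVal
  | .fold w => .fold (substV v x w)
  | .memo w => .memo (substV v x w)
  | .lazy F w => .lazy F (substV v x w)

def substE (v : Val) (x : String) : Expr → Expr
  | .ret w => .ret (substV v x w)
  | .alloc hv => .alloc (substH v x hv)
  | .letE y e₁ e₂ => .letE y (substE v x e₁) (if y = x then e₂ else substE v x e₂)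
  | .caseE w y₁ e₁ y₂ e₂ =>
      .caseE (substV v x w) y₁ (if y₁ = x then e₁ else substE v x e₁)
        y₂ (if y₂ = x then e₂ else substE v x e₂)
  | .splitE w y₁ y₂ e =>
      .splitE (substV v x w) y₁ y₂ (if y₁ = x ∨ y₂ = x then e else substE v x e)
  | .app w₁ w₂ => .app (substV v x w₁) (substV v x w₂)
  | .unfoldE w => .unfoldE (substV v x w)
  | .call F w => .call F (substV v x w)
  | .force w => .force (substV v x w)
  | .save n w => .save n (substV v x w)
  | .spend n w e => .spend n (substV v x w) (substE v x e)
  | .pass w => .pass (substV v x w)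
end

/-! ## Heaps: finite partial maps from pointers to (annotated) heap values -/

structure Heap (A : Type) : Type where
  look : Nat → Option A
  fin : {a : Nat | look a ≠ none}.Finite

namespace Heap

def empty {A : Type} : Heap A := ⟨fun _ => none, by simp⟩

def upd {A : Type} (Γ : Heap A) (a : Nat) (v : A) : Heap A :=
  ⟨fun b => if b = a then some v else Γ.look b, by
    apply Set.Finite.subset (Γ.fin.insert a)
    intro b hb
    simp only [Set.mem_setOf_eq] at hb
    by_cases h : b = a
    · simp [h]
    · simp only [h, if_false] at hb
      exact Set.mem_insert_iff.mpr (Or.inr hb)⟩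

def erase {A : Type} (Γ : Heap A) (a : Nat) : Heap A :=
  ⟨fun b => if b = a then none else Γ.look b, by
    apply Set.Finite.subset Γ.fin
    intro b hb
    simp only [Set.mem_setOf_eq] at hb ⊢
    by_cases h : b = a
    · simp [h] at hb
    · simpa [h] using hb⟩

def eraseSet {A : Type} (Γ : Heap A) (D : Finset Nat) : Heap A :=
  ⟨fun b => if b ∈ D then none else Γ.look b, by
    apply Set.Finite.subset Γ.fin
    intro b hb
    simp only [Set.mem_setOf_eq] at hb ⊢
    by_cases h : b ∈ D
    · simp [h] at hb
    · simpa [h] using hb⟩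

def map {A B : Type} (Γ : Heap A) (f : A → B) : Heap B :=
  ⟨fun b => (Γ.look b).map f, by
    apply Set.Finite.subset Γ.fin
    intro b hb
    simp only [Set.mem_setOf_eq] at hb ⊢
    intro h
    rw [h] at hb
    simp at hb⟩

noncomputable def dom {A : Type} (Γ : Heap A) : Finset Nat := Γ.fin.toFinset

/-- Sum a numeric annotation over all cells of the heap. -/
noncomputable def total {A : Type} (Γ : Heap A) (f : A → ℕ) : ℕ :=
  ∑ a ∈ Γ.dom, (Γ.look a).elim 0 f

end Heap

/-! ## The real cost semantics ⇓ᴿ -/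

/-- Environment of top-level (possibly recursive) function definitions. -/
abbrev FEnv := String → Option (String × Expr)

abbrev RHeap := Heap HeapVal

/-- Big-step real semantics `Γ : e ⇓ᴿ_k Δ : v`.  Lambda applications and
function calls cost one step; `save`, `spend` and `pass` are no-ops. -/
inductive RBig (𝓕 : FEnv) : RHeap → Expr → Nat → RHeap → Val → Prop where
  | ret : ∀ Γ v, RBig 𝓕 Γ (.ret v) 0 Γ v
  | alloc : ∀ Γ a hv, Γ.look a = none →
      RBig 𝓕 Γ (.alloc hv) 0 (Γ.upd a hv) (.ptr a)
  | letE : ∀ Γ Δ Θ x e₁ e₂ k l v w,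
      RBig 𝓕 Γ e₁ k Δ v → RBig 𝓕 Δ (substE v x e₂) l Θ w →
      RBig 𝓕 Γ (.letE x e₁ e₂) (k + l) Θ w
  | caseL : ∀ Γ Δ v x₁ e₁ x₂ e₂ k w,
      RBig 𝓕 Γ (substE v x₁ e₁) k Δ w →
      RBig 𝓕 Γ (.caseE (.inl v) x₁ e₁ x₂ e₂) k Δ w
  | caseR : ∀ Γ Δ v x₁ e₁ x₂ e₂ k w,
      RBig 𝓕 Γ (substE v x₂ e₂) k Δ w →
      RBig 𝓕 Γ (.caseE (.inr v) x₁ e₁ x₂ e₂) k Δ w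
  | splitE : ∀ Γ Δ v₁ v₂ x y e k w,
      RBig 𝓕 Γ (substE v₂ y (substE v₁ x e)) k Δ w →
      RBig 𝓕 Γ (.splitE (.pair v₁ v₂) x y e) k Δ w
  | app : ∀ Γ Δ x e v k w,
      RBig 𝓕 Γ (substE v x e) k Δ w →
      RBig 𝓕 Γ (.app (.lam x e) v) (k + 1) Δ w
  | unfoldE : ∀ Γ a v, Γ.look a = some (.fold v) →
      RBig 𝓕 Γ (.unfoldE (.ptr a)) 0 Γ v
  | call : ∀ Γ Δ F x e v k w, 𝓕 F = some (x, e) →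
      RBig 𝓕 Γ (substE v x e) k Δ w →
      RBig 𝓕 Γ (.call F v) (k + 1) Δ w
  | force : ∀ Γ Δ a F v k w, Γ.look a = some (.lazy F v) →
      RBig 𝓕 (Γ.erase a) (.call F v) k Δ w →
      RBig 𝓕 Γ (.force (.ptr a)) k (Δ.upd a (.memo w)) w
  | recall : ∀ Γ a v, Γ.look a = some (.memo v) →
      RBig 𝓕 Γ (.force (.ptr a)) 0 Γ v
  | save : ∀ Γ m v, RBig 𝓕 Γ (.save m v) 0 Γ v
  | spend : ∀ Γ Δ m v e k w, RBig 𝓕 Γ e k Δ w →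
      RBig 𝓕 Γ (.spend m v e) k Δ w
  | pass : ∀ Γ v, RBig 𝓕 Γ (.pass v) 0 Γ v
/-! ## The Bankers semantics ⇓ᴮ : every cell carries a credit annotation -/

abbrev BHeap := Heap (ℕ × HeapVal)

/-- Big-step Bankers semantics `Γ : e ⇓ᴮ_n Δ : v`. -/
inductive BBig (𝓕 : FEnv) : BHeap → Expr → Nat → BHeap → Val → Prop where
  | ret : ∀ Γ v, BBig 𝓕 Γ (.ret v) 0 Γ v
  | alloc : ∀ Γ a hv, Γ.look a = none →
      BBig 𝓕 Γ (.alloc hv) 0 (Γ.upd a (0, hv)) (.ptr a)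
  | letE : ∀ Γ Δ Θ x e₁ e₂ k l v w,
      BBig 𝓕 Γ e₁ k Δ v → BBig 𝓕 Δ (substE v x e₂) l Θ w →
      BBig 𝓕 Γ (.letE x e₁ e₂) (k + l) Θ w
  | caseL : ∀ Γ Δ v x₁ e₁ x₂ e₂ k w,
      BBig 𝓕 Γ (substE v x₁ e₁) k Δ w →
      BBig 𝓕 Γ (.caseE (.inl v) x₁ e₁ x₂ e₂) k Δ w
  | caseR : ∀ Γ Δ v x₁ e₁ x₂ e₂ k w,
      BBig 𝓕 Γ (substE v x₂ e₂) k Δ w →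
      BBig 𝓕 Γ (.caseE (.inr v) x₁ e₁ x₂ e₂) k Δ w
  | splitE : ∀ Γ Δ v₁ v₂ x y e k w,
      BBig 𝓕 Γ (substE v₂ y (substE v₁ x e)) k Δ w →
      BBig 𝓕 Γ (.splitE (.pair v₁ v₂) x y e) k Δ w
  | app : ∀ Γ Δ x e v k w,
      BBig 𝓕 Γ (substE v x e) k Δ w →
      BBig 𝓕 Γ (.app (.lam x e) v) (k + 1) Δ w
  | unfoldE : ∀ Γ a n v, Γ.look a = some (n, .fold v) →
      BBig 𝓕 Γ (.unfoldE (.ptr a)) 0 Γ v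
  | call : ∀ Γ Δ F x e v k w, 𝓕 F = some (x, e) →
      BBig 𝓕 Γ (substE v x e) k Δ w →
      BBig 𝓕 Γ (.call F v) (k + 1) Δ w
  | force : ∀ Γ Δ a n F v k w, Γ.look a = some (n, .lazy F v) →
      BBig 𝓕 (Γ.erase a) (.call F v) k Δ w →
      BBig 𝓕 Γ (.force (.ptr a)) k (Δ.upd a (n, .memo w)) w
  | recall : ∀ Γ a n v, Γ.look a = some (n, .memo v) →
      BBig 𝓕 Γ (.force (.ptr a)) 0 Γ v
  | save : ∀ Γ a n hv m, Γ.look a = some (n, hv) →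
      BBig 𝓕 Γ (.save m (.ptr a)) m (Γ.upd a (n + m, hv)) (.ptr a)
  | spend : ∀ Γ Δ a n hv m e k w, Γ.look a = some (n + m, hv) →
      BBig 𝓕 (Γ.upd a (n, hv)) e k Δ w →
      BBig 𝓕 Γ (.spend m (.ptr a) e) (k - m) Δ w

/-- The potential Φᴮ: the total number of credits in the heap. -/
noncomputable def ΦB (Γ : BHeap) : ℕ := Γ.total Prod.fst

/-- The erasure ⌊·⌋ᴮ: drop the credit annotations. -/
def stripB (Γ : BHeap) : RHeap := Γ.map Prod.snd

/-!
Call an evaluation amortized with budget `n` if its real cost plus the final potential is at most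
`n` plus the initial potential. Every Bankers rule is admissible for this relation: `save` and
`spend` are invisible to the real semantics and trade budget for potential one for one, while the
truncation in the cost of `spend` can only raise the budget.
-/

namespace Heap

section Look

theorem ext_look {A : Type} {Γ Δ : Heap A} (h : ∀ b, Γ.look b = Δ.look b) : Γ = Δ := by
  cases Γ
  cases Δ
  congr
  exact funext h

variable {A B : Type} (Γ : Heap A) (a b : ℕ) (x : A) (g : A → B)

theorem look_upd : (Γ.upd a x).look b = if b = a then some x else Γ.look b := rfl

theorem look_erase : (Γ.erase a).look b = if b = a then none else Γ.look b := rfl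

theorem look_map : (Γ.map g).look b = (Γ.look b).map g := rfl

variable {Γ a x} in
theorem upd_eq_self (h : Γ.look a = some x) : Γ.upd a x = Γ :=
  ext_look fun b ↦ by
    rw [look_upd]
    split_ifs with hb
    · rw [hb, h]
    · rfl

variable {Γ a} in
theorem erase_eq_self (h : Γ.look a = none) : Γ.erase a = Γ :=
  ext_look fun b ↦ by
    rw [look_erase]
    split_ifs with hb
    · rw [hb, h]
    · rfl

theorem map_upd : (Γ.upd a x).map g = (Γ.map g).upd a (g x) :=
  ext_look fun b ↦ by simp only [look_map, look_upd, apply_ite (Option.map g), Option.map_some]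

theorem map_erase : (Γ.erase a).map g = (Γ.map g).erase a :=
  ext_look fun b ↦ by simp only [look_map, look_erase, apply_ite (Option.map g), Option.map_none]

end Look

section Total

variable {A : Type} (Γ : Heap A) (a : ℕ) (x : A) (f : A → ℕ)

theorem mem_dom {b : ℕ} : b ∈ Γ.dom ↔ Γ.look b ≠ none :=
  Set.Finite.mem_toFinset _

theorem notMem_dom_erase : a ∉ (Γ.erase a).dom := by
  simp [mem_dom, look_erase]

theorem dom_upd : (Γ.upd a x).dom = insert a (Γ.erase a).dom := by
  ext b
  by_cases hb : b = a <;> simp [mem_dom, look_upd, look_erase, hb]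

theorem total_upd : (Γ.upd a x).total f = f x + (Γ.erase a).total f := by
  have off_a : ∀ b ∈ (Γ.erase a).dom, (Γ.upd a x).look b = (Γ.erase a).look b := fun b hb ↦ by
    have hba : b ≠ a := ne_of_mem_of_not_mem hb (Γ.notMem_dom_erase a)
    rw [look_upd, look_erase, if_neg hba, if_neg hba]
  rw [total, dom_upd, Finset.sum_insert (Γ.notMem_dom_erase a), look_upd, if_pos rfl,
    Option.elim_some, total]
  exact congrArg (f x + ·) (Finset.sum_congr rfl fun b hb ↦ by rw [off_a b hb])

variable {Γ a x} in
theorem total_eq_add_total_erase (h : Γ.look a = some x) :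
    Γ.total f = f x + (Γ.erase a).total f := by
  rw [← total_upd, upd_eq_self h]

theorem total_erase_le : (Γ.erase a).total f ≤ Γ.total f := by
  cases h : Γ.look a with
  | none => rw [erase_eq_self h]
  | some x => exact (Nat.le_add_left _ _).trans (total_eq_add_total_erase f h).ge

end Total

end Heap

section Credits

variable (Γ : BHeap) (a n : ℕ) (hv : HeapVal)

theorem stripB_upd : stripB (Γ.upd a (n, hv)) = (stripB Γ).upd a hv :=
  Heap.map_upd _ _ _ _

theorem stripB_erase : stripB (Γ.erase a) = (stripB Γ).erase a :=
  Heap.map_erase _ _ _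

theorem ΦB_upd : ΦB (Γ.upd a (n, hv)) = n + ΦB (Γ.erase a) :=
  Heap.total_upd _ _ _ _

theorem ΦB_erase_le : ΦB (Γ.erase a) ≤ ΦB Γ :=
  Heap.total_erase_le _ _ _

variable {Γ a n hv}

theorem look_stripB (ha : Γ.look a = some (n, hv)) : (stripB Γ).look a = some hv := by
  rw [stripB, Heap.look_map, ha, Option.map_some]

theorem look_stripB_eq_none (ha : Γ.look a = none) : (stripB Γ).look a = none := by
  rw [stripB, Heap.look_map, ha, Option.map_none]

theorem stripB_upd_credits (ha : Γ.look a = some (n, hv)) (m : ℕ) :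
    stripB (Γ.upd a (m, hv)) = stripB Γ := by
  rw [stripB_upd, Heap.upd_eq_self (look_stripB ha)]

theorem ΦB_eq_add_ΦB_erase (ha : Γ.look a = some (n, hv)) : ΦB Γ = n + ΦB (Γ.erase a) :=
  Heap.total_eq_add_total_erase _ ha

end Credits

/-- Amortized evaluation: `e` really evaluates between the erased heaps, at a cost which, together
with the potential of the final heap, is covered by the budget `n` and the potential of the initial
heap. The bound is stated as a sum on both sides, so that no subtraction occurs. -/
def AmortizedEval (𝓕 : FEnv) (Γ : BHeap) (e : Expr) (n : ℕ) (Δ : BHeap) (v : Val) : Prop :=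
  ∃ k, RBig 𝓕 (stripB Γ) e k (stripB Δ) v ∧ k + ΦB Δ ≤ n + ΦB Γ

namespace AmortizedEval

variable {𝓕 : FEnv} {Γ Δ Θ : BHeap} {e e' e₁ e₂ : Expr} {v w : Val} {hv : HeapVal}
  {a k l m n : ℕ} {x F : String}

theorem of_costless (h : RBig 𝓕 (stripB Γ) e 0 (stripB Γ) v) : AmortizedEval 𝓕 Γ e 0 Γ v :=
  ⟨0, h, le_rfl⟩

theorem add_cost (c : ℕ) (h : AmortizedEval 𝓕 Γ e n Δ v)
    (step : ∀ k, RBig 𝓕 (stripB Γ) e k (stripB Δ) v → RBig 𝓕 (stripB Γ) e' (k + c) (stripB Δ) v) :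
    AmortizedEval 𝓕 Γ e' (n + c) Δ v := by
  obtain ⟨k, eval, bound⟩ := h
  exact ⟨k + c, step k eval, by omega⟩

theorem alloc (ha : Γ.look a = none) :
    AmortizedEval 𝓕 Γ (.alloc hv) 0 (Γ.upd a (0, hv)) (.ptr a) := by
  refine ⟨0, ?_, ?_⟩
  · rw [stripB_upd]
    exact .alloc _ _ _ (look_stripB_eq_none ha)
  · rw [ΦB_upd, Heap.erase_eq_self ha, zero_add]

theorem letE (h₁ : AmortizedEval 𝓕 Γ e₁ k Δ v) (h₂ : AmortizedEval 𝓕 Δ (substE v x e₂) l Θ w) :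
    AmortizedEval 𝓕 Γ (.letE x e₁ e₂) (k + l) Θ w := by
  obtain ⟨k₁, eval₁, bound₁⟩ := h₁
  obtain ⟨k₂, eval₂, bound₂⟩ := h₂
  exact ⟨k₁ + k₂, .letE _ _ _ _ _ _ _ _ _ _ eval₁ eval₂, by omega⟩

theorem force (ha : Γ.look a = some (n, .lazy F v))
    (h : AmortizedEval 𝓕 (Γ.erase a) (.call F v) k Δ w) :
    AmortizedEval 𝓕 Γ (.force (.ptr a)) k (Δ.upd a (n, .memo w)) w := by
  obtain ⟨k', eval, bound⟩ := h
  refine ⟨k', ?_, ?_⟩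
  · rw [stripB_erase] at eval
    rw [stripB_upd]
    exact .force _ _ _ _ _ _ _ (look_stripB ha) eval
  · have before : ΦB Γ = n + ΦB (Γ.erase a) := ΦB_eq_add_ΦB_erase ha
    have after : ΦB (Δ.upd a (n, .memo w)) = n + ΦB (Δ.erase a) := ΦB_upd _ _ _ _
    -- Only an inequality: the body may allocate at `a`, and the update then discards that cell.
    have discarded : ΦB (Δ.erase a) ≤ ΦB Δ := ΦB_erase_le _ _
    omega

theorem save (ha : Γ.look a = some (n, hv)) :
    AmortizedEval 𝓕 Γ (.save m (.ptr a)) m (Γ.upd a (n + m, hv)) (.ptr a) := by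
  refine ⟨0, ?_, ?_⟩
  · rw [stripB_upd_credits ha]
    exact .save _ _ _
  · have before : ΦB Γ = n + ΦB (Γ.erase a) := ΦB_eq_add_ΦB_erase ha
    have after : ΦB (Γ.upd a (n + m, hv)) = n + m + ΦB (Γ.erase a) := ΦB_upd _ _ _ _
    omega

theorem spend (ha : Γ.look a = some (n + m, hv))
    (h : AmortizedEval 𝓕 (Γ.upd a (n, hv)) e k Δ w) :
    AmortizedEval 𝓕 Γ (.spend m (.ptr a) e) (k - m) Δ w := by
  obtain ⟨k', eval, bound⟩ := h
  rw [stripB_upd_credits ha] at eval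
  refine ⟨k', .spend _ _ _ _ _ _ _ eval, ?_⟩
  have before : ΦB Γ = n + m + ΦB (Γ.erase a) := ΦB_eq_add_ΦB_erase ha
  have after : ΦB (Γ.upd a (n, hv)) = n + ΦB (Γ.erase a) := ΦB_upd _ _ _ _
  omega

end AmortizedEval

theorem BBig.amortizedEval {𝓕 : FEnv} {Γ Δ : BHeap} {e : Expr} {n : ℕ} {v : Val} :
    BBig 𝓕 Γ e n Δ v → AmortizedEval 𝓕 Γ e n Δ v
  | .ret _ _ => .of_costless (.ret _ _)
  | .alloc _ _ _ ha => .alloc ha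
  | .letE _ _ _ _ _ _ _ _ _ _ h₁ h₂ => .letE h₁.amortizedEval h₂.amortizedEval
  | .caseL _ _ _ _ _ _ _ _ _ h => h.amortizedEval.add_cost 0 (.caseL _ _ _ _ _ _ _ · _)
  | .caseR _ _ _ _ _ _ _ _ _ h => h.amortizedEval.add_cost 0 (.caseR _ _ _ _ _ _ _ · _)
  | .splitE _ _ _ _ _ _ _ _ _ h => h.amortizedEval.add_cost 0 (.splitE _ _ _ _ _ _ _ · _)
  | .app _ _ _ _ _ _ _ h => h.amortizedEval.add_cost 1 (.app _ _ _ _ _ · _)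
  | .unfoldE _ _ _ _ ha => .of_costless (.unfoldE _ _ _ (look_stripB ha))
  | .call _ _ _ _ _ _ _ _ hF h => h.amortizedEval.add_cost 1 (.call _ _ _ _ _ _ · _ hF)
  | .force _ _ _ _ _ _ _ _ ha h => .force ha h.amortizedEval
  | .recall _ _ _ _ ha => .of_costless (.recall _ _ _ (look_stripB ha))
  | .save _ _ _ _ _ ha => .save ha
  | .spend _ _ _ _ _ _ _ _ _ ha h => .spend ha h.amortizedEval

/-- **Soundness of the Bankers cost model** (Lemma `bankers-sound`):
whenever `Γ : e ⇓ᴮ_n Δ : v`, there exists `k` with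
`⌊Γ⌋ᴮ : e ⇓ᴿ_k ⌊Δ⌋ᴮ : v` and `k + Φᴮ(Δ) − Φᴮ(Γ) ≤ n`. -/
theorem bankers_sound (𝓕 : FEnv) (Γ Δ : BHeap) (e : Expr) (n : ℕ) (v : Val)
    (h : BBig 𝓕 Γ e n Δ v) :
    ∃ k : ℕ, RBig 𝓕 (stripB Γ) e k (stripB Δ) v ∧
      (k : ℤ) + (ΦB Δ : ℤ) - (ΦB Γ : ℤ) ≤ (n : ℤ) := by
  obtain ⟨k, eval, bound⟩ := h.amortizedEval
  exact ⟨k, eval, by omega⟩
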